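/- Let m ≥ 10 and a ∈ [ √(2 log 2)/m, 1 ]. Let ν(x) = (2π)^{−1/2} e^{−x²/2}, and π(x) = (1 − e^{−a²m²/2}) g_m(x) + e^{−a²m²/2} u_m(x), where g_m(x) = (2π)^{−1/2} e^{−(x−m)²/2} and u_m(x) = e^{−d(x,[−m,2m])²/2} / (3m + √(2π)). Then for every λ ∈ [0,1], the geometric-mean normalization satisfies e^{−λ a² m²/2} / (10 m) ≤ ∫_ℝ ν(x)^{1−λ} π(x)^λ dx ≤ 4 ( e^{−λ a² m²/2} + e^{−λ(1−λ) m²/2} ); equivalently, the normalizing constant c_λ = (∫ ν^{1−λ} π^λ dx)^{−1} satisfies 1/( 4( e^{−λ a² m²/2} + e^{−λ(1−λ)m²/2} ) ) ≤ c_λ ≤ 10 m · e^{λ a² m²/2}. -/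

import Mathlib

open MeasureTheory Real

/-- The standard Gaussian density on ℝ. -/
noncomputable def stdGauss (x : ℝ) : ℝ := Real.exp (-x ^ 2 / 2) / Real.sqrt (2 * Real.pi)

/-- The density of N(m, 1). -/
noncomputable def gaussAt (m x : ℝ) : ℝ := Real.exp (-(x - m) ^ 2 / 2) / Real.sqrt (2 * Real.pi)

/-- The smoothed uniform density on [−m, 2m]. -/
noncomputable def smUnif (m x : ℝ) : ℝ :=
  Real.exp (-(Metric.infDist x (Set.Icc (-m) (2 * m))) ^ 2 / 2) / (3 * m + Real.sqrt (2 * Real.pi))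

/-- The general unimodal target π = (1 − e^{−a²m²/2}) N(m,1) + e^{−a²m²/2} u_m. -/
noncomputable def piDensA (m a x : ℝ) : ℝ :=
  (1 - Real.exp (-(a ^ 2 * m ^ 2) / 2)) * gaussAt m x
    + Real.exp (-(a ^ 2 * m ^ 2) / 2) * smUnif m x

/-!
Write `Z(f, g) = ∫ f^{1-λ} g^λ` and let `w = e^{-a²m²/2}`, so that `π = (1 - w) g_m + w u_m`.
In its second argument `Z` is monotone, homogeneous of degree `λ` and subadditive, hence
`w^λ Z(ν, u_m) ≤ Z(ν, π) ≤ Z(ν, g_m) + w^λ Z(ν, u_m)`.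
Completing the square gives `Z(ν, g_m) = e^{-λ(1-λ)m²/2}`, and `Z(ν, u_m) ≤ 1` because both
arguments are probability densities. Finally `u_m ≥ c ν` with `c = √(2π) / (3m + √(2π))`,
so that `Z(ν, u_m) ≥ Z(ν, c ν) = c^λ`.
-/

section TemperingMass

variable {α : Type*} {mα : MeasurableSpace α} {μ : Measure α} {f g h : α → ℝ} {t : ℝ}

/-- The total mass of the geometric tempering `f ^ (1 - t) * g ^ t` between `f` and `g`, that is,
the reciprocal of the normalizing constant `c_t`. The functions `f` and `g` need not be normalized,
so that the mass can be estimated separately on each component of a mixture. -/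
noncomputable def temperingMass (μ : Measure α) (f g : α → ℝ) (t : ℝ) : ℝ :=
  ∫ x, f x ^ (1 - t) * g x ^ t ∂μ

theorem ae_rpow_mul_rpow_le (ht : t ∈ Set.Icc (0 : ℝ) 1) (hf₀ : 0 ≤ᵐ[μ] f) (hg₀ : 0 ≤ᵐ[μ] g) :
    ∀ᵐ x ∂μ, f x ^ (1 - t) * g x ^ t ≤ (1 - t) * f x + t * g x := by
  filter_upwards [hf₀, hg₀] with x hfx hgx
  exact geom_mean_le_arith_mean2_weighted (sub_nonneg.2 ht.2) ht.1 hfx hgx (sub_add_cancel 1 t)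

theorem integrable_rpow_mul_rpow (ht : t ∈ Set.Icc (0 : ℝ) 1) (hf : Integrable f μ)
    (hg : Integrable g μ) (hf₀ : 0 ≤ᵐ[μ] f) (hg₀ : 0 ≤ᵐ[μ] g) :
    Integrable (fun x ↦ f x ^ (1 - t) * g x ^ t) μ := by
  refine ((hf.const_mul (1 - t)).add (hg.const_mul t)).mono'
    ((hf.aemeasurable.pow_const _).mul (hg.aemeasurable.pow_const _)).aestronglyMeasurable ?_
  filter_upwards [ae_rpow_mul_rpow_le ht hf₀ hg₀, hf₀, hg₀] with x hle hfx hgx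
  rwa [norm_of_nonneg (mul_nonneg (rpow_nonneg hfx _) (rpow_nonneg hgx _))]

theorem temperingMass_le_arith_mean (ht : t ∈ Set.Icc (0 : ℝ) 1) (hf : Integrable f μ)
    (hg : Integrable g μ) (hf₀ : 0 ≤ᵐ[μ] f) (hg₀ : 0 ≤ᵐ[μ] g) :
    temperingMass μ f g t ≤ (1 - t) * ∫ x, f x ∂μ + t * ∫ x, g x ∂μ := by
  rw [← integral_const_mul, ← integral_const_mul,
    ← integral_add (hf.const_mul _) (hg.const_mul _)]
  exact integral_mono_ae (integrable_rpow_mul_rpow ht hf hg hf₀ hg₀)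
    ((hf.const_mul _).add (hg.const_mul _)) (ae_rpow_mul_rpow_le ht hf₀ hg₀)

theorem temperingMass_self (hf₀ : 0 ≤ᵐ[μ] f) : temperingMass μ f f t = ∫ x, f x ∂μ := by
  refine integral_congr_ae ?_
  filter_upwards [hf₀] with x hfx
  rw [← rpow_add' hfx (by simp), sub_add_cancel, rpow_one]

theorem temperingMass_const_mul_right {c : ℝ} (hc : 0 ≤ c) (hg₀ : 0 ≤ᵐ[μ] g) :
    temperingMass μ f (fun x ↦ c * g x) t = c ^ t * temperingMass μ f g t := by
  rw [temperingMass, temperingMass, ← integral_const_mul]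
  refine integral_congr_ae ?_
  filter_upwards [hg₀] with x hgx
  rw [mul_rpow hc hgx, mul_left_comm]

theorem temperingMass_mono_right (ht : t ∈ Set.Icc (0 : ℝ) 1) (hf : Integrable f μ)
    (hg : Integrable g μ) (hh : Integrable h μ) (hf₀ : 0 ≤ᵐ[μ] f) (hg₀ : 0 ≤ᵐ[μ] g)
    (hgh : g ≤ᵐ[μ] h) : temperingMass μ f g t ≤ temperingMass μ f h t := by
  refine integral_mono_ae (integrable_rpow_mul_rpow ht hf hg hf₀ hg₀)
    (integrable_rpow_mul_rpow ht hf hh hf₀ (hg₀.trans hgh)) ?_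
  filter_upwards [hf₀, hg₀, hgh] with x hfx hgx hghx
  exact mul_le_mul_of_nonneg_left (rpow_le_rpow hgx hghx ht.1) (rpow_nonneg hfx _)

theorem temperingMass_add_right_le (ht : t ∈ Set.Icc (0 : ℝ) 1) (hf : Integrable f μ)
    (hg : Integrable g μ) (hh : Integrable h μ) (hf₀ : 0 ≤ᵐ[μ] f) (hg₀ : 0 ≤ᵐ[μ] g)
    (hh₀ : 0 ≤ᵐ[μ] h) :
    temperingMass μ f (fun x ↦ g x + h x) t ≤ temperingMass μ f g t + temperingMass μ f h t := by
  have hfg := integrable_rpow_mul_rpow ht hf hg hf₀ hg₀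
  have hfh := integrable_rpow_mul_rpow ht hf hh hf₀ hh₀
  have hgh₀ : 0 ≤ᵐ[μ] fun x ↦ g x + h x := by
    filter_upwards [hg₀, hh₀] with x hgx hhx using add_nonneg hgx hhx
  rw [temperingMass, temperingMass, temperingMass, ← integral_add hfg hfh]
  refine integral_mono_ae (integrable_rpow_mul_rpow ht hf (hg.add hh) hf₀ hgh₀)
    (hfg.add hfh) ?_
  filter_upwards [hf₀, hg₀, hh₀] with x hfx hgx hhx
  rw [← mul_add]
  exact mul_le_mul_of_nonneg_left (rpow_add_le_add_rpow hgx hhx ht.1 ht.2) (rpow_nonneg hfx _)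

theorem const_rpow_mul_integral_le_temperingMass {c : ℝ} (ht : t ∈ Set.Icc (0 : ℝ) 1) (hc : 0 ≤ c)
    (hf : Integrable f μ) (hg : Integrable g μ) (hf₀ : 0 ≤ᵐ[μ] f)
    (hfg : (fun x ↦ c * f x) ≤ᵐ[μ] g) : c ^ t * ∫ x, f x ∂μ ≤ temperingMass μ f g t := by
  rw [← temperingMass_self (t := t) hf₀, ← temperingMass_const_mul_right hc hf₀]
  exact temperingMass_mono_right ht hf (hf.const_mul c) hg hf₀
    (hf₀.mono fun _ hx ↦ mul_nonneg hc hx) hfg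

theorem rpow_mul_temperingMass_le_mixture {w : ℝ} (hw : w ∈ Set.Icc (0 : ℝ) 1)
    (ht : t ∈ Set.Icc (0 : ℝ) 1) (hf : Integrable f μ) (hg : Integrable g μ)
    (hh : Integrable h μ) (hf₀ : 0 ≤ᵐ[μ] f) (hg₀ : 0 ≤ᵐ[μ] g) (hh₀ : 0 ≤ᵐ[μ] h) :
    w ^ t * temperingMass μ f h t
      ≤ temperingMass μ f (fun x ↦ (1 - w) * g x + w * h x) t := by
  rw [← temperingMass_const_mul_right hw.1 hh₀]
  refine temperingMass_mono_right ht hf (hh.const_mul w)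
    ((hg.const_mul (1 - w)).add (hh.const_mul w)) hf₀
    (hh₀.mono fun _ hx ↦ mul_nonneg hw.1 hx) ?_
  filter_upwards [hg₀] with x hgx
  exact le_add_of_nonneg_left (mul_nonneg (sub_nonneg.2 hw.2) hgx)

theorem temperingMass_mixture_le {w : ℝ} (hw : w ∈ Set.Icc (0 : ℝ) 1)
    (ht : t ∈ Set.Icc (0 : ℝ) 1) (hf : Integrable f μ) (hg : Integrable g μ)
    (hh : Integrable h μ) (hf₀ : 0 ≤ᵐ[μ] f) (hg₀ : 0 ≤ᵐ[μ] g) (hh₀ : 0 ≤ᵐ[μ] h) :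
    temperingMass μ f (fun x ↦ (1 - w) * g x + w * h x) t
      ≤ (1 - w) ^ t * temperingMass μ f g t + w ^ t * temperingMass μ f h t := by
  have hw' : 0 ≤ 1 - w := sub_nonneg.2 hw.2
  rw [← temperingMass_const_mul_right hw' hg₀, ← temperingMass_const_mul_right hw.1 hh₀]
  exact temperingMass_add_right_le ht hf (hg.const_mul _) (hh.const_mul _) hf₀
    (hg₀.mono fun _ hx ↦ mul_nonneg hw' hx) (hh₀.mono fun _ hx ↦ mul_nonneg hw.1 hx)

end TemperingMass

section Gaussian

theorem stdGauss_eq_gaussAt_zero : stdGauss = gaussAt 0 := by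
  funext x
  rw [stdGauss, gaussAt, sub_zero]

theorem gaussAt_eq_gaussianPDFReal (m : ℝ) : gaussAt m = ProbabilityTheory.gaussianPDFReal m 1 := by
  funext x
  rw [gaussAt, ProbabilityTheory.gaussianPDFReal, NNReal.coe_one, mul_one, mul_one, div_eq_inv_mul]

theorem gaussAt_nonneg (m x : ℝ) : 0 ≤ gaussAt m x := by
  rw [gaussAt]
  positivity

theorem integrable_gaussAt (m : ℝ) : Integrable (gaussAt m) :=
  gaussAt_eq_gaussianPDFReal m ▸ ProbabilityTheory.integrable_gaussianPDFReal m 1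

theorem integral_gaussAt (m : ℝ) : ∫ x, gaussAt m x = 1 :=
  gaussAt_eq_gaussianPDFReal m ▸ ProbabilityTheory.integral_gaussianPDFReal_eq_one m one_ne_zero

theorem stdGauss_nonneg (x : ℝ) : 0 ≤ stdGauss x :=
  stdGauss_eq_gaussAt_zero ▸ gaussAt_nonneg 0 x

theorem integrable_stdGauss : Integrable stdGauss :=
  stdGauss_eq_gaussAt_zero ▸ integrable_gaussAt 0

theorem integral_stdGauss : ∫ x, stdGauss x = 1 :=
  stdGauss_eq_gaussAt_zero ▸ integral_gaussAt 0

theorem gaussAt_rpow_mul_gaussAt_rpow (a b t x : ℝ) :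
    gaussAt a x ^ (1 - t) * gaussAt b x ^ t
      = exp (-(t * (1 - t) * (b - a) ^ 2) / 2) * gaussAt ((1 - t) * a + t * b) x := by
  have hs : 0 < √(2 * π) := by positivity
  simp only [gaussAt]
  rw [div_rpow (exp_pos _).le hs.le, div_rpow (exp_pos _).le hs.le, ← exp_mul, ← exp_mul,
    div_mul_div_comm, ← exp_add, ← rpow_add hs, sub_add_cancel, rpow_one, mul_div_assoc',
    ← exp_add]
  ring_nf

theorem temperingMass_gaussAt_gaussAt (a b t : ℝ) :
    temperingMass volume (gaussAt a) (gaussAt b) t = exp (-(t * (1 - t) * (b - a) ^ 2) / 2) := by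
  simp only [temperingMass, gaussAt_rpow_mul_gaussAt_rpow]
  rw [integral_const_mul, integral_gaussAt, mul_one]

end Gaussian

theorem setIntegral_preimage_sub_const {G E : Type*} [AddGroup G] [MeasurableSpace G]
    [MeasurableAdd G] {μ : Measure G} [μ.IsAddRightInvariant] [NormedAddCommGroup E]
    [NormedSpace ℝ E] (f : G → E) (c : G) (s : Set G) :
    ∫ x in (fun x ↦ x - c) ⁻¹' s, f (x - c) ∂μ = ∫ x in s, f x ∂μ :=
  (measurePreserving_sub_right μ c).setIntegral_preimage_emb
    (MeasurableEquiv.subRight c).measurableEmbedding f s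

section InfDistIcc

variable {a b x : ℝ}

theorem infDist_Icc_of_le_left (hab : a ≤ b) (hx : x ≤ a) :
    Metric.infDist x (Set.Icc a b) = |x - a| := by
  refine le_antisymm (Metric.infDist_le_dist_of_mem (Set.left_mem_Icc.2 hab))
    ((Metric.le_infDist (Set.nonempty_Icc.2 hab)).2 fun y hy ↦ ?_)
  rw [dist_eq, abs_sub_comm x a, abs_sub_comm x y]
  exact abs_le_abs_of_nonneg (sub_nonneg.2 hx) (sub_le_sub_right hy.1 x)

theorem infDist_Icc_of_right_le (hab : a ≤ b) (hx : b ≤ x) :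
    Metric.infDist x (Set.Icc a b) = |x - b| := by
  refine le_antisymm (Metric.infDist_le_dist_of_mem (Set.right_mem_Icc.2 hab))
    ((Metric.le_infDist (Set.nonempty_Icc.2 hab)).2 fun y hy ↦ ?_)
  exact abs_le_abs_of_nonneg (sub_nonneg.2 hx) (sub_le_sub_left hy.2 x)

variable {E : Type*} {φ : ℝ → E}

theorem eqOn_comp_infDist_Icc_Iic (hab : a ≤ b) :
    Set.EqOn (fun x ↦ φ (Metric.infDist x (Set.Icc a b))) (fun x ↦ φ |x - a|) (Set.Iic a) :=
  fun _ hx ↦ congrArg φ (infDist_Icc_of_le_left hab hx)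

theorem eqOn_comp_infDist_Icc_Ioi (hab : a ≤ b) :
    Set.EqOn (fun x ↦ φ (Metric.infDist x (Set.Icc a b))) (fun x ↦ φ |x - b|) (Set.Ioi b) :=
  fun _ hx ↦ congrArg φ (infDist_Icc_of_right_le hab (Set.mem_Ioi.1 hx).le)

theorem eqOn_comp_infDist_Icc_Ioc :
    Set.EqOn (fun x ↦ φ (Metric.infDist x (Set.Icc a b))) (fun _ ↦ φ 0) (Set.Ioc a b) :=
  fun _ hx ↦ congrArg φ (Metric.infDist_zero_of_mem (Set.Ioc_subset_Icc_self hx))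

variable [NormedAddCommGroup E]

theorem integrable_comp_infDist_Icc (hab : a ≤ b) (hφ : Integrable fun x ↦ φ |x|) :
    Integrable fun x ↦ φ (Metric.infDist x (Set.Icc a b)) := by
  have hIic := (hφ.comp_sub_right a).integrableOn.congr_fun
    (eqOn_comp_infDist_Icc_Iic hab).symm measurableSet_Iic
  have hIoc := (integrableOn_const (μ := volume) (by simp)).congr_fun
    (eqOn_comp_infDist_Icc_Ioc (φ := φ) (a := a) (b := b)).symm measurableSet_Ioc
  have hIoi := (hφ.comp_sub_right b).integrableOn.congr_fun
    (eqOn_comp_infDist_Icc_Ioi hab).symm measurableSet_Ioi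
  rw [← integrableOn_univ, ← Set.Iic_union_Ioi (a := a), ← Set.Ioc_union_Ioi_eq_Ioi hab]
  exact hIic.union (hIoc.union hIoi)

-- The two outer pieces, translated to the origin, glue to a single integral over the line.
theorem integral_comp_infDist_Icc [NormedSpace ℝ E] [CompleteSpace E] (hab : a ≤ b)
    (hφ : Integrable fun x ↦ φ |x|) :
    ∫ x, φ (Metric.infDist x (Set.Icc a b)) = (b - a) • φ 0 + ∫ x, φ |x| := by
  have hint := integrable_comp_infDist_Icc hab hφ
  have hIic : ∫ x in Set.Iic a, φ (Metric.infDist x (Set.Icc a b)) = ∫ x in Set.Iic 0, φ |x| := by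
    rw [setIntegral_congr_fun measurableSet_Iic (eqOn_comp_infDist_Icc_Iic hab),
      ← setIntegral_preimage_sub_const (fun x ↦ φ |x|) a, Set.preimage_sub_const_Iic, zero_add]
  have hIoc : ∫ x in Set.Ioc a b, φ (Metric.infDist x (Set.Icc a b)) = (b - a) • φ 0 := by
    rw [setIntegral_congr_fun measurableSet_Ioc eqOn_comp_infDist_Icc_Ioc, setIntegral_const,
      volume_real_Ioc_of_le hab]
  have hIoi : ∫ x in Set.Ioi b, φ (Metric.infDist x (Set.Icc a b)) = ∫ x in Set.Ioi 0, φ |x| := by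
    rw [setIntegral_congr_fun measurableSet_Ioi (eqOn_comp_infDist_Icc_Ioi hab),
      ← setIntegral_preimage_sub_const (fun x ↦ φ |x|) b, Set.preimage_sub_const_Ioi, zero_add]
  rw [← intervalIntegral.integral_Iic_add_Ioi (b := a) hint.integrableOn hint.integrableOn,
    ← Set.Ioc_union_Ioi_eq_Ioi hab, setIntegral_union Set.Ioc_disjoint_Ioi_same measurableSet_Ioi
      hint.integrableOn hint.integrableOn, hIic, hIoc, hIoi,
    ← intervalIntegral.integral_Iic_add_Ioi (b := 0) hφ.integrableOn hφ.integrableOn]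
  abel

end InfDistIcc

section SmoothedUniform

variable {m : ℝ}

theorem integrable_exp_neg_sq_div_two : Integrable fun x : ℝ ↦ exp (-x ^ 2 / 2) := by
  simpa only [neg_mul, one_div_mul_eq_div, neg_div] using
    integrable_exp_neg_mul_sq (b := 1 / 2) (by norm_num)

theorem integral_exp_neg_sq_div_two : ∫ x : ℝ, exp (-x ^ 2 / 2) = √(2 * π) := by
  simpa only [neg_mul, one_div_mul_eq_div, neg_div, div_div_eq_mul_div, div_one, mul_comm π] using
    integral_gaussian (1 / 2)

theorem smUnif_nonneg (hm : 0 ≤ m) (x : ℝ) : 0 ≤ smUnif m x := by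
  rw [smUnif]
  positivity

theorem integrable_smUnif (hm : 0 ≤ m) : Integrable (smUnif m) :=
  (integrable_comp_infDist_Icc (φ := fun d ↦ exp (-d ^ 2 / 2)) (by linarith)
    (by simpa only [sq_abs] using integrable_exp_neg_sq_div_two)).div_const _

theorem integral_smUnif (hm : 0 ≤ m) : ∫ x, smUnif m x = 1 := by
  have hmass := integral_comp_infDist_Icc (φ := fun d ↦ exp (-d ^ 2 / 2))
    (show -m ≤ 2 * m by linarith) (by simpa only [sq_abs] using integrable_exp_neg_sq_div_two)
  simp only [sq_abs, integral_exp_neg_sq_div_two, ne_eq, OfNat.ofNat_ne_zero, not_false_eq_true,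
    zero_pow, neg_zero, zero_div, exp_zero, smul_eq_mul, mul_one] at hmass
  simp only [smUnif]
  rw [integral_div, hmass, div_eq_one_iff_eq (by positivity)]
  ring

theorem const_mul_stdGauss_le_smUnif (hm : 0 ≤ m) (x : ℝ) :
    √(2 * π) / (3 * m + √(2 * π)) * stdGauss x ≤ smUnif m x := by
  have hzero : (0 : ℝ) ∈ Set.Icc (-m) (2 * m) := by constructor <;> linarith
  have hdist : Metric.infDist x (Set.Icc (-m) (2 * m)) ≤ |x| := by
    simpa only [dist_zero_right, norm_eq_abs] using Metric.infDist_le_dist_of_mem hzero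
  have hsq : Metric.infDist x (Set.Icc (-m) (2 * m)) ^ 2 ≤ x ^ 2 :=
    sq_le_sq.2 (by rwa [abs_of_nonneg Metric.infDist_nonneg])
  calc √(2 * π) / (3 * m + √(2 * π)) * stdGauss x
      = exp (-x ^ 2 / 2) / (3 * m + √(2 * π)) := by
        rw [stdGauss]
        field_simp
    _ ≤ smUnif m x := by
        rw [smUnif]
        gcongr

end SmoothedUniform

section Bounds

variable {m t : ℝ}

theorem temperingMass_stdGauss_gaussAt (m t : ℝ) :
    temperingMass volume stdGauss (gaussAt m) t = exp (-(t * (1 - t) * m ^ 2) / 2) := by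
  rw [stdGauss_eq_gaussAt_zero, temperingMass_gaussAt_gaussAt, sub_zero]

theorem temperingMass_stdGauss_smUnif_le_one (hm : 0 ≤ m) (ht : t ∈ Set.Icc (0 : ℝ) 1) :
    temperingMass volume stdGauss (smUnif m) t ≤ 1 := by
  refine (temperingMass_le_arith_mean ht integrable_stdGauss (integrable_smUnif hm)
    (ae_of_all _ stdGauss_nonneg) (ae_of_all _ (smUnif_nonneg hm))).trans_eq ?_
  rw [integral_stdGauss, integral_smUnif hm, mul_one, mul_one, sub_add_cancel]

theorem le_temperingMass_stdGauss_smUnif (hm : 0 ≤ m) (ht : t ∈ Set.Icc (0 : ℝ) 1) :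
    (√(2 * π) / (3 * m + √(2 * π))) ^ t ≤ temperingMass volume stdGauss (smUnif m) t := by
  simpa only [integral_stdGauss, mul_one] using
    const_rpow_mul_integral_le_temperingMass ht (by positivity) integrable_stdGauss
      (integrable_smUnif hm) (ae_of_all _ stdGauss_nonneg)
      (ae_of_all _ (const_mul_stdGauss_le_smUnif hm))

theorem inv_ten_mul_le_rpow (hm : 1 ≤ m) (ht : t ≤ 1) :
    (10 * m)⁻¹ ≤ (√(2 * π) / (3 * m + √(2 * π))) ^ t := by
  have hsqrt : 1 ≤ √(2 * π) := one_le_sqrt.2 (by linarith [pi_gt_three])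
  calc (10 * m)⁻¹ ≤ √(2 * π) / (3 * m + √(2 * π)) := by
        rw [inv_eq_one_div, div_le_div_iff₀ (by positivity) (by positivity)]
        nlinarith
    _ ≤ (√(2 * π) / (3 * m + √(2 * π))) ^ t :=
        self_le_rpow_of_le_one (by positivity)
          (div_le_one_of_le₀ (by linarith) (by positivity)) ht

end Bounds

theorem unimodal_tempering_normalizing_constant_bounds_general
    (m a : ℝ) (hm : 0 ≤ m) (lam : ℝ) (hlam : lam ∈ Set.Icc (0 : ℝ) 1) :
    exp (-(lam * a ^ 2 * m ^ 2) / 2) * (√(2 * π) / (3 * m + √(2 * π))) ^ lam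
      ≤ (∫ x, (stdGauss x) ^ (1 - lam) * (piDensA m a x) ^ lam) ∧
    (∫ x, (stdGauss x) ^ (1 - lam) * (piDensA m a x) ^ lam)
      ≤ exp (-(lam * a ^ 2 * m ^ 2) / 2) + exp (-(lam * (1 - lam) * m ^ 2) / 2) := by
  set w := exp (-(a ^ 2 * m ^ 2) / 2)
  have hw : w ∈ Set.Icc (0 : ℝ) 1 :=
    ⟨(exp_pos _).le, exp_le_one_iff.2 (by linarith [mul_nonneg (sq_nonneg a) (sq_nonneg m)])⟩
  have hw_rpow : exp (-(lam * a ^ 2 * m ^ 2) / 2) = w ^ lam := by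
    rw [← exp_mul]
    ring_nf
  have hν₀ := ae_of_all volume stdGauss_nonneg
  have hg₀ := ae_of_all volume (gaussAt_nonneg m)
  have hu₀ := ae_of_all volume (smUnif_nonneg hm)
  have hlower := rpow_mul_temperingMass_le_mixture hw hlam integrable_stdGauss
    (integrable_gaussAt m) (integrable_smUnif hm) hν₀ hg₀ hu₀
  have hupper := temperingMass_mixture_le hw hlam integrable_stdGauss
    (integrable_gaussAt m) (integrable_smUnif hm) hν₀ hg₀ hu₀
  rw [temperingMass_stdGauss_gaussAt] at hupper
  have hwt : 0 ≤ w ^ lam := rpow_nonneg hw.1 lam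
  have hwt' : (1 - w) ^ lam ≤ 1 :=
    rpow_le_one (sub_nonneg.2 hw.2) (sub_le_self 1 hw.1) hlam.1
  rw [hw_rpow, add_comm (w ^ lam)]
  exact ⟨(mul_le_mul_of_nonneg_left (le_temperingMass_stdGauss_smUnif hm hlam) hwt).trans hlower,
    hupper.trans <| add_le_add (mul_le_of_le_one_left (exp_pos _).le hwt')
      (mul_le_of_le_one_right hwt (temperingMass_stdGauss_smUnif_le_one hm hlam))⟩

/-- For m ≥ 10, a ∈ [√(2 log 2)/m, 1] and λ ∈ [0,1], the geometric-mean
normalization satisfies e^{−λa²m²/2}/(10m) ≤ ∫ ν^{1−λ}π^λ ≤ 4(e^{−λa²m²/2} + e^{−λ(1−λ)m²/2});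
equivalently, 1/(4(e^{−λa²m²/2}+e^{−λ(1−λ)m²/2})) ≤ c_λ ≤ 10m·e^{λa²m²/2}. -/
theorem unimodal_tempering_normalizing_constant_bounds
    (m a : ℝ) (hm : 10 ≤ m)
    (ha : a ∈ Set.Icc (Real.sqrt (2 * Real.log 2) / m) 1)
    (lam : ℝ) (hlam : lam ∈ Set.Icc (0 : ℝ) 1) :
    Real.exp (-(lam * a ^ 2 * m ^ 2) / 2) / (10 * m)
      ≤ (∫ x, (stdGauss x) ^ (1 - lam) * (piDensA m a x) ^ lam) ∧
    (∫ x, (stdGauss x) ^ (1 - lam) * (piDensA m a x) ^ lam)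
      ≤ 4 * (Real.exp (-(lam * a ^ 2 * m ^ 2) / 2)
              + Real.exp (-(lam * (1 - lam) * m ^ 2) / 2)) := by
  obtain ⟨hlower, hupper⟩ :=
    unimodal_tempering_normalizing_constant_bounds_general m a (by linarith) lam hlam
  exact ⟨(mul_le_mul_of_nonneg_left (inv_ten_mul_le_rpow (by linarith) hlam.2)
    (exp_pos _).le).trans hlower,
    hupper.trans (le_mul_of_one_le_left (by positivity) (by norm_num))⟩
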